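/- Let Λ be a balanced and spanning cone in 𝕍. If f : 𝕍 → ℝ is Λ-convex and of linear growth, then f is Lipschitz continuous; moreover, for all z ∈ 𝕍 and w ∈ Λ one has f(z+w) ≤ f(z) + f^∞(w), where f^∞ is the upper recession function of f. -/

import Mathlib

open MeasureTheory Filter Topology

noncomputable section

/-! ## Basic PDE setup -/

abbrev Dom (n : ℕ) := Fin n → ℝ

def unitCube (n : ℕ) : Set (Dom n) := Set.univ.pi fun _ => Set.Ioo (-(1/2) : ℝ) (1/2)

def closedUnitCube (n : ℕ) : Set (Dom n) := Set.univ.pi fun _ => Set.Icc (-(1/2) : ℝ) (1/2)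

/-- The finite set of multi-indices of degree `k`. -/
def degSet (n k : ℕ) : Finset (Fin n → ℕ) :=
  (Fintype.piFinset fun _ : Fin n => Finset.range (k+1)).filter fun α => (∑ i, α i) = k

/-- Partial derivative in the `j`-th coordinate direction. -/
def pderivDir {n : ℕ} {V : Type*} [NormedAddCommGroup V] [NormedSpace ℝ V]
    (j : Fin n) (u : Dom n → V) : Dom n → V :=
  fun x => fderiv ℝ u x (Pi.single j 1)

/-- The multi-index partial derivative `∂^α`. -/
def mderiv {n : ℕ} {V : Type*} [NormedAddCommGroup V] [NormedSpace ℝ V]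
    (α : Fin n → ℕ) (u : Dom n → V) : Dom n → V :=
  (List.finRange n).foldr (fun j f => (pderivDir j)^[α j] f) u

/-- The action of a homogeneous `k`-th order constant-coefficient operator with
coefficients `A α` on a function. -/
def opApply {n : ℕ} {V W : Type*} [NormedAddCommGroup V] [NormedSpace ℝ V]
    [NormedAddCommGroup W] [NormedSpace ℝ W]
    (A : (Fin n → ℕ) → (V →L[ℝ] W)) (k : ℕ) (u : Dom n → V) (x : Dom n) : W :=
  ∑ α ∈ degSet n k, A α (mderiv α u x)

/-- The symbol `𝒜(ξ) = Σ_{|α|=k} ξ^α A_α`. -/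
def opSymbol {n : ℕ} {V W : Type*} [NormedAddCommGroup V] [NormedSpace ℝ V]
    [NormedAddCommGroup W] [NormedSpace ℝ W]
    (A : (Fin n → ℕ) → (V →L[ℝ] W)) (k : ℕ) (ξ : Dom n) : V →L[ℝ] W :=
  ∑ α ∈ degSet n k, (∏ i, ξ i ^ α i) • A α

/-- The wave cone `Λ_𝒜 = ⋃_{ξ ≠ 0} ker 𝒜(ξ)`. -/
def waveCone {n : ℕ} {V W : Type*} [NormedAddCommGroup V] [NormedSpace ℝ V]
    [NormedAddCommGroup W] [NormedSpace ℝ W]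
    (A : (Fin n → ℕ) → (V →L[ℝ] W)) (k : ℕ) : Set V :=
  {v | ∃ ξ : Dom n, ξ ≠ 0 ∧ opSymbol A k ξ v = 0}

/-- The wave cone is spanning. -/
def SpanningCone {n : ℕ} {V W : Type*} [NormedAddCommGroup V] [NormedSpace ℝ V]
    [NormedAddCommGroup W] [NormedSpace ℝ W]
    (A : (Fin n → ℕ) → (V →L[ℝ] W)) (k : ℕ) : Prop :=
  Submodule.span ℝ (waveCone A k) = ⊤

/-- `ℬ` is an exact potential of `𝒜`:  `ker 𝒜(ξ) = im ℬ(ξ)` for all `ξ ≠ 0`. -/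
def ExactPotential {n : ℕ} {U V W : Type*} [NormedAddCommGroup V] [NormedSpace ℝ V]
    [NormedAddCommGroup W] [NormedSpace ℝ W] [NormedAddCommGroup U] [NormedSpace ℝ U]
    (A : (Fin n → ℕ) → (V →L[ℝ] W)) (k : ℕ)
    (B : (Fin n → ℕ) → (U →L[ℝ] V)) (l : ℕ) : Prop :=
  ∀ ξ : Dom n, ξ ≠ 0 → LinearMap.ker (opSymbol A k ξ : V →ₗ[ℝ] W) = LinearMap.range (opSymbol B l ξ : U →ₗ[ℝ] V)

/-- `ℤⁿ`-periodicity. -/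
def ZPeriodic {n : ℕ} {V : Type*} (v : Dom n → V) : Prop :=
  ∀ (x : Dom n) (m : Fin n → ℤ), v (x + fun i => (m i : ℝ)) = v x

/-- `𝒜`-quasiconvexity of a continuous integrand. -/
def AQuasiconvex {n : ℕ} {V W : Type*} [NormedAddCommGroup V] [NormedSpace ℝ V]
    [NormedAddCommGroup W] [NormedSpace ℝ W]
    (A : (Fin n → ℕ) → (V →L[ℝ] W)) (k : ℕ) (f : V → ℝ) : Prop :=
  Continuous f ∧ ∀ (z : V) (v : Dom n → V), ContDiff ℝ (⊤ : ℕ∞) v → ZPeriodic v →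
    (∫ x in unitCube n, v x) = 0 → (∀ x, opApply A k v x = 0) →
    f z ≤ ∫ x in unitCube n, f (z + v x)

def LinearGrowth {V : Type*} [NormedAddCommGroup V] (f : V → ℝ) : Prop :=
  ∃ c : ℝ, ∀ z, |f z| ≤ c * (1 + ‖z‖)

/-- Upper recession function `f^∞(z) = limsup_{t→∞, z'→z} f(tz')/t`. -/
def urec {V : Type*} [NormedAddCommGroup V] [NormedSpace ℝ V] (f : V → ℝ) (z : V) : ℝ :=
  limsup (fun p : ℝ × V => f (p.1 • p.2) / p.1) (atTop ×ˢ 𝓝 z)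

/-- The radial recession function `z ↦ limsup_{t→∞} f(tz)/t`. -/
def rrec {V : Type*} [NormedAddCommGroup V] [NormedSpace ℝ V] (f : V → ℝ) (z : V) : ℝ :=
  limsup (fun t : ℝ => f (t • z) / t) atTop

/-- `g` is the recession function of `Φ`, the limit being locally uniform. -/
def HasRec {V : Type*} [NormedAddCommGroup V] [NormedSpace ℝ V] (Φ g : V → ℝ) : Prop :=
  TendstoLocallyUniformly (fun (t : ℝ) (z : V) => Φ (t • z) / t) g atTop

/-- Membership in the class `ℍ`. -/
def MemH {V : Type*} [NormedAddCommGroup V] [NormedSpace ℝ V] (Φ : V → ℝ) : Prop :=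
  Continuous Φ ∧ LinearGrowth Φ ∧ ∃ g : V → ℝ, HasRec Φ g

/-- `C_c^∞` functions with support in `Ω`. -/
def CcSmooth {n : ℕ} {U : Type*} [NormedAddCommGroup U] [NormedSpace ℝ U]
    (Ω : Set (Dom n)) (u : Dom n → U) : Prop :=
  ContDiff ℝ (⊤ : ℕ∞) u ∧ HasCompactSupport u ∧ tsupport u ⊆ Ω

/-- The `W^{l-1,1}` norm : sum of the `L¹` norms of derivatives of order `< l`. -/
def sobNorm {n : ℕ} {U : Type*} [NormedAddCommGroup U] [NormedSpace ℝ U]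
    (l : ℕ) (u : Dom n → U) : ℝ :=
  ∑ j ∈ Finset.range l, ∫ x : Dom n, ‖iteratedFDeriv ℝ j u x‖

/-- Membership of a pair `(ν⁰, ν^∞)` in the set `Y(z)` of Young measures generated by
sequences `z + ℬ u_j` with `u_j ∈ C_c^∞(𝕏, 𝕌)` and `‖u_j‖_{W^{l-1,1}} → 0`. -/
def memY {n : ℕ} {U V : Type*} [NormedAddCommGroup V] [InnerProductSpace ℝ V]
    [FiniteDimensional ℝ V] [MeasurableSpace V] [BorelSpace V]
    [NormedAddCommGroup U] [NormedSpace ℝ U]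
    (B : (Fin n → ℕ) → (U →L[ℝ] V)) (l : ℕ) (z : V)
    (nu0 : Measure V) (nuInf : Measure (Metric.sphere (0:V) 1)) : Prop :=
  ∃ u : ℕ → Dom n → U,
    (∀ j, CcSmooth (unitCube n) (u j)) ∧
    Tendsto (fun j => sobNorm l (u j)) atTop (𝓝 0) ∧
    ∀ Φ : V → ℝ, MemH Φ →
      Tendsto (fun j => ∫ x in unitCube n, Φ (z + opApply B l (u j) x)) atTop
        (𝓝 ((∫ v, Φ v ∂nu0) + ∫ w, rrec Φ (w : V) ∂nuInf))

/-! ## Statement 10: Λ-convex functions of linear growth -/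

theorem aux_secant {V : Type*} [NormedAddCommGroup V] [InnerProductSpace ℝ V]
    (f : V → ℝ) (z w : V)
    (h : ConvexOn ℝ Set.univ fun t : ℝ => f (z + t • w)) (t : ℝ) (ht : 1 ≤ t) :
    f (z + w) - f z ≤ f (z + t • w) / t - f z / t := by
  have ht0 : 0 < t := by linarith
  have h1 := h.2 (Set.mem_univ (0:ℝ)) (Set.mem_univ t)
    (show (0:ℝ) ≤ 1 - 1 / t by rw [sub_nonneg, div_le_one ht0]; exact ht)
    (show (0:ℝ) ≤ 1 / t by positivity) (by ring)
  have e : (1 - 1 / t) • (0:ℝ) + (1 / t) • t = 1 := by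
    simp only [smul_eq_mul]; field_simp; ring
  simp only [e] at h1
  simp only [one_smul, zero_smul, add_zero, smul_eq_mul] at h1
  have : f (z + t • w) / t - f z / t = (1 - 1 / t) * f z + 1 / t * f (z + t • w) - f z := by ring
  linarith

theorem aux_dir {V : Type*} [NormedAddCommGroup V] [InnerProductSpace ℝ V]
    (f : V → ℝ) (c : ℝ) (hc : ∀ z, |f z| ≤ c * (1 + ‖z‖)) (hc0 : 0 ≤ c) (z w : V)
    (h : ConvexOn ℝ Set.univ fun t : ℝ => f (z + t • w)) :
    f (z + w) - f z ≤ c * ‖w‖ := by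
  have hlim : Tendsto (fun t : ℝ => c * ‖w‖ + (2 * c * (1 + ‖z‖)) / t) atTop
      (𝓝 (c * ‖w‖ + 0)) :=
    tendsto_const_nhds.add (tendsto_const_nhds.div_atTop tendsto_id)
  rw [add_zero] at hlim
  refine ge_of_tendsto hlim ?_
  filter_upwards [eventually_ge_atTop (1:ℝ)] with t ht
  have ht0 : 0 < t := by linarith
  refine (aux_secant f z w h t ht).trans ?_
  rw [← sub_div, div_le_iff₀ ht0, add_mul, div_mul_cancel₀ _ ht0.ne']
  have h1 := (abs_le.1 (hc (z + t • w))).2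
  have h2 := (abs_le.1 (hc z)).1
  have h3 : ‖z + t • w‖ ≤ ‖z‖ + t * ‖w‖ := by
    refine (norm_add_le _ _).trans ?_
    rw [norm_smul, Real.norm_of_nonneg ht0.le]
  have h4 := mul_le_mul_of_nonneg_left h3 hc0
  nlinarith

theorem aux_span {V : Type*} [NormedAddCommGroup V] [InnerProductSpace ℝ V]
    (f : V → ℝ) (Λ : Set V) (hΛ : ∀ w ∈ Λ, ∃ K : ℝ, ∀ z, ∀ r : ℝ, |f (z + r • w) - f z| ≤ K * |r|)
    (v : V) (hv : v ∈ Submodule.span ℝ Λ) :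
    ∃ K : ℝ, ∀ z, ∀ r : ℝ, |f (z + r • v) - f z| ≤ K * |r| := by
  induction hv using Submodule.span_induction with
  | mem x hx => exact hΛ x hx
  | zero => exact ⟨0, fun z r => by simp⟩
  | add x y _ _ hx hy =>
    obtain ⟨K, hK⟩ := hx
    obtain ⟨L, hL⟩ := hy
    refine ⟨K + L, fun z r => ?_⟩
    have h1 := hK z r
    have h2 := hL (z + r • x) r
    have e : z + r • (x + y) = z + r • x + r • y := by rw [smul_add, add_assoc]
    rw [e, add_mul]
    have := abs_sub_le (f (z + r • x + r • y)) (f (z + r • x)) (f z)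
    linarith
  | smul a x _ hx =>
    obtain ⟨K, hK⟩ := hx
    refine ⟨K * |a|, fun z r => ?_⟩
    have := hK z (r * a)
    rw [smul_smul]
    refine this.trans (le_of_eq ?_)
    rw [abs_mul]; ring

theorem aux_sum {V ι : Type*} [NormedAddCommGroup V] [InnerProductSpace ℝ V]
    (f : V → ℝ) (b : ι → V) (K : ι → ℝ)
    (hK : ∀ i, ∀ z, ∀ r : ℝ, |f (z + r • b i) - f z| ≤ K i * |r|) (r : ι → ℝ) (z : V)
    (s : Finset ι) :
    |f (z + ∑ i ∈ s, r i • b i) - f z| ≤ ∑ i ∈ s, K i * |r i| := by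
  classical
  induction s using Finset.induction_on with
  | empty => simp
  | insert i s hi ih =>
    rw [Finset.sum_insert hi, Finset.sum_insert hi]
    have h1 := hK i (z + ∑ i ∈ s, r i • b i) (r i)
    have e : z + (r i • b i + ∑ i ∈ s, r i • b i) = z + ∑ i ∈ s, r i • b i + r i • b i := by abel
    rw [e]
    have := abs_sub_le (f (z + ∑ i ∈ s, r i • b i + r i • b i)) (f (z + ∑ i ∈ s, r i • b i)) (f z)
    linarith

theorem stmt10 {V : Type*} [NormedAddCommGroup V] [InnerProductSpace ℝ V]
    [FiniteDimensional ℝ V] (Λ : Set V)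
    (hcone : ∀ w ∈ Λ, ∀ c : ℝ, 0 ≤ c → c • w ∈ Λ)
    (hbal : ∀ w ∈ Λ, -w ∈ Λ) (hspan : Submodule.span ℝ Λ = ⊤)
    (f : V → ℝ)
    (hconv : ∀ z : V, ∀ w ∈ Λ, ConvexOn ℝ Set.univ fun t : ℝ => f (z + t • w))
    (hgrow : LinearGrowth f) :
    (∃ K : NNReal, LipschitzWith K f) ∧
      ∀ z : V, ∀ w ∈ Λ, f (z + w) ≤ f z + urec f w := by
  obtain ⟨c, hc⟩ := hgrow
  have hc0 : 0 ≤ c := by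
    have := (abs_nonneg _).trans (hc 0)
    simpa using this
  have hsm : ∀ w ∈ Λ, ∀ r : ℝ, r • w ∈ Λ := by
    intro w hw r
    rcases le_total 0 r with h | h
    · exact hcone w hw r h
    · have := hbal _ (hcone w hw (-r) (by linarith))
      simpa using this
  refine ⟨?_, ?_⟩
  · have hΛ : ∀ w ∈ Λ, ∃ K : ℝ, ∀ z, ∀ r : ℝ, |f (z + r • w) - f z| ≤ K * |r| := by
      intro w hw
      refine ⟨c * ‖w‖, fun z r => ?_⟩
      have h1 := aux_dir f c hc hc0 z (r • w) (hconv z _ (hsm w hw r))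
      have h2 := aux_dir f c hc hc0 (z + r • w) (-(r • w)) (hconv _ _ (hbal _ (hsm w hw r)))
      rw [add_neg_cancel_right, norm_neg] at h2
      rw [norm_smul, Real.norm_eq_abs] at h1 h2
      rw [abs_le]
      constructor <;> nlinarith
    have hall : ∀ v : V, ∃ K : ℝ, ∀ z, ∀ r : ℝ, |f (z + r • v) - f z| ≤ K * |r| :=
      fun v => aux_span f Λ hΛ v (by rw [hspan]; trivial)
    let b := Module.finBasis ℝ V
    choose K hK using fun i => hall (b i)
    have hK0 : ∀ i, 0 ≤ K i := fun i => by
      have := (abs_nonneg _).trans (hK i 0 1)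
      simpa using this
    let C : ℝ := ∑ i, K i * ‖LinearMap.toContinuousLinearMap (b.coord i)‖
    have hC : 0 ≤ C := Finset.sum_nonneg fun i _ => mul_nonneg (hK0 i) (norm_nonneg _)
    refine ⟨⟨C, hC⟩, LipschitzWith.of_dist_le_mul fun x y => ?_⟩
    rw [Real.dist_eq, dist_eq_norm]
    have h := aux_sum f b K hK (fun i => b.repr (x - y) i) y Finset.univ
    rw [b.sum_repr, add_sub_cancel] at h
    refine h.trans ?_
    change _ ≤ C * _
    rw [Finset.sum_mul]
    refine Finset.sum_le_sum fun i _ => ?_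
    rw [mul_assoc]
    refine mul_le_mul_of_nonneg_left ?_ (hK0 i)
    exact (LinearMap.toContinuousLinearMap (b.coord i)).le_opNorm (x - y)
  · intro z w hw
    have hbdd : IsBoundedUnder (· ≤ ·) (atTop ×ˢ 𝓝 w)
        (fun p : ℝ × V => f (p.1 • p.2) / p.1) := by
      refine ⟨c * (1 + (‖w‖ + 1)), ?_⟩
      rw [eventually_map]
      have hw1 : ∀ᶠ v in 𝓝 w, ‖v‖ < ‖w‖ + 1 :=
        continuous_norm.continuousAt.eventually_lt continuousAt_const (by simp)
      filter_upwards [(eventually_ge_atTop (1:ℝ)).prod_mk hw1] with p hp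
      obtain ⟨h1, h2⟩ := hp
      have ht0 : 0 < p.1 := by linarith
      rw [div_le_iff₀ ht0]
      refine (abs_le.1 (hc _)).2.trans ?_
      rw [norm_smul, Real.norm_of_nonneg ht0.le, mul_assoc]
      refine mul_le_mul_of_nonneg_left ?_ hc0
      nlinarith
    have htend : Tendsto (fun t : ℝ => (t, w + t⁻¹ • z)) atTop (atTop ×ˢ 𝓝 w) := by
      refine tendsto_id.prodMk ?_
      have : Tendsto (fun t : ℝ => w + t⁻¹ • z) atTop (𝓝 (w + (0:ℝ) • z)) :=
        tendsto_const_nhds.add (tendsto_inv_atTop_zero.smul_const z)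
      simpa using this
    rw [← sub_le_iff_le_add']
    refine le_of_forall_pos_sub_le fun ε hε => ?_
    refine le_limsup_of_frequently_le ?_ hbdd
    refine htend.frequently (Eventually.frequently ?_)
    have hz : Tendsto (fun t : ℝ => f z / t) atTop (𝓝 0) :=
      tendsto_const_nhds.div_atTop tendsto_id
    filter_upwards [eventually_ge_atTop (1:ℝ), hz.eventually (lt_mem_nhds (neg_lt_zero.2 hε))]
      with t ht h2
    have ht0 : t ≠ 0 := by linarith
    have h1 := aux_secant f z w (hconv z w hw) t ht
    have e : t • (w + t⁻¹ • z) = z + t • w := by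
      rw [smul_add, smul_inv_smul₀ ht0, add_comm]
    simp only [e]
    linarith

end
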